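/- If A is a unique representation basis of the integers, then liminf_{x→∞} A(-x,x)/√(x/log x) ≤ 4√7. -/

import Mathlib

open Filter Set

/-- `repCount A n` is the number of representations of `n` as `a + a'` with
`a ≤ a'` and `a, a' ∈ A`. -/
noncomputable def repCount (A : Set ℤ) (n : ℤ) : ℕ :=
  {p : ℤ × ℤ | p.1 ∈ A ∧ p.2 ∈ A ∧ p.1 ≤ p.2 ∧ p.1 + p.2 = n}.ncard

/-- `A` is a unique representation basis of `ℤ` if `r_A(n) = 1` for all `n`. -/
def IsUniqueRepBasis (A : Set ℤ) : Prop := ∀ n : ℤ, repCount A n = 1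

/-- `countIn A y x` is the number of elements of `A` in the real interval `[y, x]`. -/
noncomputable def countIn (A : Set ℤ) (y x : ℝ) : ℕ :=
  {a : ℤ | a ∈ A ∧ y ≤ (a : ℝ) ∧ (a : ℝ) ≤ x}.ncard

/-! Erdős's averaging argument. In a Sidon set `A` at most one ordered pair has a given nonzero
difference, so if the integers are cut into blocks of length `B`, the numbers `D q` of elements of
`A` in the `2 * n` blocks nearest to the origin satisfy `∑ D q ^ 2 ≤ ∑ D q + 2 * B`. If `j q` is the
rank of the block `q` counted outwards from the origin, Cauchy–Schwarz then bounds
`(∑ D q / √(j q)) ^ 2` by `(∑ D q + 2 * B) * (2 + 2 * log n)`. On the other hand, if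
`A(-x, x) ≥ c * √(x / log x)` for all large `x`, summation by parts bounds `∑ D q / √(j q)` below by
about `c * √(B / log (n * B)) * log n / 2`. For `B = k ^ 2 * n` the Sidon property also gives
`∑ D q ≤ 2 * k * n + 1`, which is negligible against `B` for large `k`; letting first `n` and then
`k` tend to infinity yields `c ^ 2 ≤ 32`. -/

open scoped Finset

/-- A Sidon set: the sum of two elements determines them up to order. -/
def IsSidon {G : Type*} [Add G] (A : Set G) : Prop :=
  ∀ ⦃a⦄, a ∈ A → ∀ ⦃b⦄, b ∈ A → ∀ ⦃c⦄, c ∈ A → ∀ ⦃d⦄, d ∈ A →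
    a + b = c + d → (a = c ∧ b = d) ∨ (a = d ∧ b = c)

theorem IsUniqueRepBasis.isSidon {A : Set ℤ} (hA : IsUniqueRepBasis A) : IsSidon A := by
  have eq_of_le : ∀ {a b c d : ℤ}, a ∈ A → b ∈ A → c ∈ A → d ∈ A → a ≤ b → c ≤ d →
      a + b = c + d → a = c ∧ b = d := by
    intro a b c d ha hb hc hd hab hcd h
    obtain ⟨p, hp⟩ := Set.ncard_eq_one.mp (hA (c + d))
    have h_left : (a, b) = p := hp.subset ⟨ha, hb, hab, h⟩
    have h_right : (c, d) = p := hp.subset ⟨hc, hd, hcd, rfl⟩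
    exact Prod.mk.inj (h_left.trans h_right.symm)
  intro a ha b hb c hc d hd h
  rcases le_total a b with hab | hba <;> rcases le_total c d with hcd | hdc
  · exact .inl (eq_of_le ha hb hc hd hab hcd h)
  · exact .inr (eq_of_le ha hb hd hc hab hdc (by omega))
  · exact .inr (eq_of_le hb ha hc hd hba hcd (by omega)).symm
  · exact .inl (eq_of_le hb ha hd hc hba hdc (by omega)).symm

theorem IsSidon.injOn_sub {G : Type*} [AddCommGroup G] {A : Set G} (hA : IsSidon A) :
    A.offDiag.InjOn fun p => p.2 - p.1 := by
  rintro ⟨a, b⟩ ⟨ha, hb, hab⟩ ⟨c, d⟩ ⟨hc, hd, -⟩ h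
  have hsum : a + d = c + b := by
    rw [add_comm, add_comm c]
    exact (sub_eq_sub_iff_add_eq_add.mp h).symm
  rcases hA ha hd hc hb hsum with ⟨hac, hdb⟩ | ⟨hab', -⟩
  · exact Prod.ext hac hdb.symm
  · exact absurd hab' hab

theorem IsSidon.card_le_two_mul {A : Set ℤ} (hA : IsSidon A) {P : Finset (ℤ × ℤ)} {B : ℕ}
    (hPA : ↑P ⊆ A.offDiag) (hPB : ∀ p ∈ P, |p.2 - p.1| ≤ B) : #P ≤ 2 * B := by
  have hcard : #((Finset.Icc (-B : ℤ) B).erase 0) = 2 * B := by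
    rw [Finset.card_erase_of_mem (by simp), Int.card_Icc]
    omega
  rw [← hcard]
  refine Finset.card_le_card_of_injOn (fun p => p.2 - p.1) (fun p hp => ?_) (hA.injOn_sub.mono hPA)
  exact Finset.mem_coe.mpr <| Finset.mem_erase.mpr
    ⟨sub_ne_zero.mpr (hPA hp).2.2.symm, Finset.mem_Icc.mpr (abs_le.mp (hPB p hp))⟩

section Fibers

variable {α ι : Type*} [DecidableEq ι] {F : Finset α} {r : α → ι} {T : Finset ι}

theorem sum_card_fiber_sq (hr : ∀ a ∈ F, r a ∈ T) :
    ∑ q ∈ T, #{a ∈ F | r a = q} ^ 2 = #F + #{p ∈ F.offDiag | r p.1 = r p.2} := by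
  have hpairs : ∀ p ∈ ({p ∈ F.offDiag | r p.1 = r p.2} : Finset (α × α)), r p.1 ∈ T :=
    fun p hp => hr _ (Finset.mem_offDiag.mp (Finset.mem_filter.mp hp).1).1
  rw [Finset.card_eq_sum_card_fiberwise hr, Finset.card_eq_sum_card_fiberwise hpairs,
    ← Finset.sum_add_distrib]
  refine Finset.sum_congr rfl fun q _ => ?_
  have hfiber : ({p ∈ ({p ∈ F.offDiag | r p.1 = r p.2} : Finset (α × α)) | r p.1 = q}) =
      ({a ∈ F | r a = q} : Finset α).offDiag := by
    ext p
    simp only [Finset.mem_filter, Finset.mem_offDiag]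
    grind
  rw [hfiber, Finset.offDiag_card, sq, Nat.add_sub_cancel' (Nat.le_mul_self _)]

theorem sq_sum_comp_le {R : Type*} [CommRing R] [LinearOrder R] [IsStrictOrderedRing R]
    (hr : ∀ a ∈ F, r a ∈ T) (g : ι → R) :
    (∑ a ∈ F, g (r a)) ^ 2 ≤ (∑ q ∈ T, (#{a ∈ F | r a = q} : R) ^ 2) * ∑ q ∈ T, g q ^ 2 := by
  have hfibers : ∑ a ∈ F, g (r a) = ∑ q ∈ T, (#{a ∈ F | r a = q} : R) * g q := by
    simp only [← Finset.sum_fiberwise_of_maps_to' hr, Finset.sum_const, nsmul_eq_mul]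
  rw [hfibers]
  exact Finset.sum_mul_sq_le_sq_mul_sq _ _ _

theorem sum_sub_mul_card_filter {R : Type*} [Ring R] (f : ℕ → R) {h : α → ℕ} {m n : ℕ}
    (hh : ∀ a ∈ F, h a ∈ Finset.Icc m n) :
    ∑ l ∈ Finset.Ico m n, (f l - f (l + 1)) * #{a ∈ F | h a ≤ l} = ∑ a ∈ F, (f (h a) - f n) := by
  have hcard (l : ℕ) : (f l - f (l + 1)) * #{a ∈ F | h a ≤ l} =
      ∑ a ∈ F, if h a ≤ l then f l - f (l + 1) else 0 := by
    rw [← Finset.sum_filter, Finset.sum_const, nsmul_eq_mul, Nat.cast_comm]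
  simp only [hcard]
  rw [Finset.sum_comm]
  refine Finset.sum_congr rfl fun a ha => ?_
  obtain ⟨hma, han⟩ := Finset.mem_Icc.mp (hh a ha)
  rw [← Finset.sum_filter, Finset.Ico_filter_le, max_eq_right hma,
    ← neg_sub (f n), ← Finset.sum_Ico_sub f han, ← Finset.sum_neg_distrib]
  exact Finset.sum_congr rfl fun l _ => (neg_sub _ _).symm

end Fibers

theorem IsSidon.sum_card_fiber_sq_le {ι : Type*} [DecidableEq ι] {F : Finset ℤ}
    (hF : IsSidon (F : Set ℤ)) {r : ℤ → ι} {T : Finset ι} {B : ℕ} (hr : ∀ a ∈ F, r a ∈ T)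
    (hB : ∀ a b, r a = r b → |b - a| ≤ B) :
    ∑ q ∈ T, #{a ∈ F | r a = q} ^ 2 ≤ #F + 2 * B := by
  rw [sum_card_fiber_sq hr]
  refine Nat.add_le_add_left (hF.card_le_two_mul ?_ ?_) _
  · rw [← Finset.coe_offDiag]
    exact Finset.coe_subset.mpr (Finset.filter_subset _ _)
  · exact fun p hp => hB _ _ (Finset.mem_filter.mp hp).2

theorem IsSidon.sq_card_le {F : Finset ℤ} (hF : IsSidon (F : Set ℤ)) {B : ℕ}
    (hB : ∀ a ∈ F, ∀ b ∈ F, |b - a| ≤ B) : #F ^ 2 ≤ #F + 2 * B := by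
  have hoff : #F.offDiag ≤ 2 * B := by
    refine hF.card_le_two_mul (Finset.coe_offDiag F).le fun p hp => ?_
    obtain ⟨h₁, h₂, -⟩ := Finset.mem_offDiag.mp hp
    exact hB _ h₁ _ h₂
  rw [Finset.offDiag_card] at hoff
  rw [sq]
  omega

open Classical in
/-- The elements of `A` in `[-m, m)`. The interval is half-open so that `window A (l * B)` is the
part of `A` in a union of blocks `[q * B, (q + 1) * B)`. -/
noncomputable def window (A : Set ℤ) (m : ℕ) : Finset ℤ := {a ∈ Finset.Ico (-m : ℤ) m | a ∈ A}

theorem mem_window {A : Set ℤ} {m : ℕ} {a : ℤ} : a ∈ window A m ↔ (-m ≤ a ∧ a < m) ∧ a ∈ A := by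
  classical rw [window, Finset.mem_filter, Finset.mem_Ico]

theorem IsSidon.coe_window {A : Set ℤ} (hA : IsSidon A) (m : ℕ) : IsSidon (window A m : Set ℤ) :=
  fun _ ha _ hb _ hc _ hd =>
    hA (mem_window.mp ha).2 (mem_window.mp hb).2 (mem_window.mp hc).2 (mem_window.mp hd).2

theorem IsSidon.card_window_sq_le {A : Set ℤ} (hA : IsSidon A) (k : ℕ) :
    #(window A (k ^ 2)) ≤ 2 * k + 1 := by
  have hsq := (hA.coe_window (k ^ 2)).sq_card_le (B := 2 * k ^ 2) fun a ha b hb => by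
    have ha_mem := (mem_window.mp ha).1
    have hb_mem := (mem_window.mp hb).1
    push_cast at ha_mem hb_mem ⊢
    exact abs_le.mpr ⟨by linarith, by linarith⟩
  by_contra! hlt
  nlinarith

theorem countIn_le_card_window (A : Set ℤ) (m : ℕ) :
    countIn A (-((m : ℝ) - 1)) ((m : ℝ) - 1) ≤ #(window A m) := by
  rw [countIn, ← Set.ncard_coe_finset]
  refine Set.ncard_le_ncard ?_ (Finset.finite_toSet _)
  rintro a ⟨haA, hma, ham⟩
  have hlower : (-m : ℝ) ≤ a := by linarith
  have hupper : (a : ℝ) < m := by linarith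
  exact mem_window.mpr ⟨⟨by exact_mod_cast hlower, by exact_mod_cast hupper⟩, haA⟩

/-- The rank, counted outwards from the origin and starting at `1`, of the block with index `q`;
the blocks with indices `q` and `-1 - q` lie symmetrically and have the same rank. -/
def blockRank (q : ℤ) : ℕ := (max (q + 1) (-q)).toNat

theorem one_le_blockRank (q : ℤ) : 1 ≤ blockRank q := by
  unfold blockRank
  omega

theorem blockRank_le_iff {q : ℤ} {l : ℕ} : blockRank q ≤ l ↔ -l ≤ q ∧ q < l := by
  unfold blockRank
  omega

theorem blockRank_ediv_le_iff {B : ℕ} (hB : 0 < B) {a : ℤ} {l : ℕ} :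
    blockRank (a / B) ≤ l ↔ -(l * B : ℕ) ≤ a ∧ a < (l * B : ℕ) := by
  have hB' : (0 : ℤ) < B := by exact_mod_cast hB
  rw [blockRank_le_iff, Int.le_ediv_iff_mul_le hB', Int.ediv_lt_iff_lt_mul hB', neg_mul,
    Nat.cast_mul]

theorem sum_comp_blockRank {M : Type*} [AddCommMonoid M] (g : ℕ → M) (n : ℕ) :
    ∑ q ∈ Finset.Ico (-n : ℤ) n, g (blockRank q) = 2 • ∑ l ∈ Finset.Icc 1 n, g l := by
  induction n with
  | zero => simp
  | succ n ih =>
    have hIco : Finset.Ico (-(n + 1 : ℕ) : ℤ) (n + 1 : ℕ) =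
        insert (n : ℤ) (insert (-(n + 1) : ℤ) (Finset.Ico (-n : ℤ) n)) := by
      ext q
      simp only [Finset.mem_insert, Finset.mem_Ico]
      omega
    have hright : blockRank n = n + 1 := by unfold blockRank; omega
    have hleft : blockRank (-(n + 1)) = n + 1 := by unfold blockRank; omega
    rw [hIco, Finset.sum_insert (by simp; omega), Finset.sum_insert (by simp), ih, hright, hleft,
      Finset.sum_Icc_succ_top (Nat.le_add_left 1 n), smul_add]
    abel

theorem filter_window_blockRank_le (A : Set ℤ) {n B l : ℕ} (hB : 0 < B) (hl : l ≤ n) :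
    {a ∈ window A (n * B) | blockRank (a / B) ≤ l} = window A (l * B) := by
  have hmono : ((l * B : ℕ) : ℤ) ≤ (n * B : ℕ) := by exact_mod_cast Nat.mul_le_mul_right B hl
  ext a
  rw [Finset.mem_filter, mem_window, mem_window, blockRank_ediv_le_iff hB]
  constructor
  · rintro ⟨⟨-, haA⟩, hal⟩
    exact ⟨hal, haA⟩
  · rintro ⟨⟨hla, hal⟩, haA⟩
    exact ⟨⟨⟨by linarith, by linarith⟩, haA⟩, hla, hal⟩

theorem abs_sub_le_of_ediv_eq {B a b : ℤ} (hB : 0 < B) (h : a / B = b / B) : |b - a| ≤ B := by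
  have ha := Int.emod_add_mul_ediv a B
  have hb := Int.emod_add_mul_ediv b B
  have := Int.emod_nonneg a hB.ne'
  have := Int.emod_nonneg b hB.ne'
  have := Int.emod_lt_of_pos a hB
  have := Int.emod_lt_of_pos b hB
  rw [h] at ha
  exact abs_le.mpr ⟨by linarith, by linarith⟩

theorem sum_Icc_inv_le_one_add_log (n : ℕ) :
    ∑ l ∈ Finset.Icc 1 n, (l : ℝ)⁻¹ ≤ 1 + Real.log n := by
  simpa only [harmonic_eq_sum_Icc, Rat.cast_sum, Rat.cast_inv, Rat.cast_natCast] using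
    harmonic_le_one_add_log n

theorem log_sub_one_le_sum_Icc_inv_succ (n : ℕ) :
    Real.log n - 1 ≤ ∑ l ∈ Finset.Icc 1 n, ((l : ℝ) + 1)⁻¹ := by
  have hsplit : (harmonic (n + 1) : ℝ) = 1 + ∑ l ∈ Finset.Icc 1 n, ((l : ℝ) + 1)⁻¹ := by
    rw [harmonic, Finset.range_eq_Ico, Finset.sum_eq_sum_Ico_succ_bot n.succ_pos,
      ← Finset.Ico_add_one_right_eq_Icc]
    push_cast
    norm_num
  have hlog : Real.log n ≤ Real.log (n + 1 + 1 : ℕ) := by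
    rcases n.eq_zero_or_pos with rfl | hn
    · simpa using Real.log_nonneg one_le_two
    · exact Real.log_le_log (by exact_mod_cast hn) (by push_cast; linarith)
  linarith [log_add_one_le_harmonic (n + 1)]

theorem inv_two_mul_succ_le_sqrt_mul {x : ℝ} (hx : 0 < x) :
    (2 * (x + 1))⁻¹ ≤ √x * ((√x)⁻¹ - (√(x + 1))⁻¹) := by
  set u := √x
  set v := √(x + 1)
  have hu : 0 < u := Real.sqrt_pos.mpr hx
  have hv : 0 < v := Real.sqrt_pos.mpr (by linarith)
  have hu_sq : u ^ 2 = x := Real.sq_sqrt hx.le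
  have hv_sq : v ^ 2 = x + 1 := Real.sq_sqrt (by linarith)
  have hdiff : u * (u⁻¹ - v⁻¹) - (2 * v ^ 2)⁻¹ = (v - u) ^ 2 / (2 * v ^ 2) := by
    field_simp
    linarith
  rw [← hv_sq, ← sub_nonneg, hdiff]
  positivity

theorem mul_log_le_sum_inv_sqrt {α : Type*} {F : Finset α} {h : α → ℕ} {n : ℕ} {K : ℝ}
    (hK : 0 ≤ K) (hh : ∀ a ∈ F, h a ∈ Finset.Icc 1 n)
    (hcount : ∀ l ∈ Finset.Icc 1 n, K * √l ≤ #{a ∈ F | h a ≤ l}) :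
    K * ((Real.log n - 1) / 2) ≤ ∑ a ∈ F, (√(h a))⁻¹ := by
  let f (l : ℕ) : ℝ := (√l)⁻¹
  have hterm : ∀ l ∈ Finset.Icc 1 n,
      K * (((l : ℝ) + 1)⁻¹ / 2) ≤ (f l - f (l + 1)) * #{a ∈ F | h a ≤ l} := by
    intro l hl
    have hl_pos : (0 : ℝ) < l := by exact_mod_cast (Finset.mem_Icc.mp hl).1
    have hf : 0 ≤ f l - f (l + 1) :=
      sub_nonneg.mpr (inv_anti₀ (Real.sqrt_pos.mpr hl_pos) (Real.sqrt_le_sqrt (by simp)))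
    calc K * (((l : ℝ) + 1)⁻¹ / 2) = K * (2 * ((l : ℝ) + 1))⁻¹ := by rw [mul_inv]; ring
      _ ≤ K * (√l * (f l - f (l + 1))) := by
        gcongr
        simpa only [f, Nat.cast_succ] using inv_two_mul_succ_le_sqrt_mul hl_pos
      _ = (f l - f (l + 1)) * (K * √l) := by ring
      _ ≤ (f l - f (l + 1)) * #{a ∈ F | h a ≤ l} :=
        mul_le_mul_of_nonneg_left (hcount l hl) hf
  calc K * ((Real.log n - 1) / 2)
      ≤ K * ((∑ l ∈ Finset.Icc 1 n, ((l : ℝ) + 1)⁻¹) / 2) := by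
        gcongr
        exact log_sub_one_le_sum_Icc_inv_succ n
    _ ≤ ∑ l ∈ Finset.Icc 1 n, (f l - f (l + 1)) * #{a ∈ F | h a ≤ l} := by
        rw [Finset.sum_div, Finset.mul_sum]
        exact Finset.sum_le_sum hterm
    _ = ∑ a ∈ F, (f (h a) - f (n + 1)) := by
        rw [← Finset.Ico_add_one_right_eq_Icc]
        exact sum_sub_mul_card_filter f fun a ha =>
          Finset.Icc_subset_Icc_right n.le_succ (hh a ha)
    _ ≤ ∑ a ∈ F, (√(h a))⁻¹ :=
        Finset.sum_le_sum fun a _ => sub_le_self _ (by positivity)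

namespace IsSidon

variable {A : Set ℤ} {n B : ℕ}

theorem sq_sum_inv_sqrt_blockRank_le (hA : IsSidon A) (hB : 0 < B) :
    (∑ a ∈ window A (n * B), (√(blockRank (a / B)))⁻¹) ^ 2 ≤
      (#(window A (n * B)) + 2 * B) * (2 * (1 + Real.log n)) := by
  have hB' : (0 : ℤ) < B := by exact_mod_cast hB
  have hmaps : ∀ a ∈ window A (n * B), a / (B : ℤ) ∈ Finset.Ico (-n : ℤ) n := fun a ha =>
    Finset.mem_Ico.mpr <| blockRank_le_iff.mp <|
      (blockRank_ediv_le_iff hB).mpr (mem_window.mp ha).1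
  have hsq : ∑ q ∈ Finset.Ico (-n : ℤ) n,
      (#{a ∈ window A (n * B) | a / (B : ℤ) = q} : ℝ) ^ 2 ≤
        #(window A (n * B)) + 2 * B := by
    exact_mod_cast (hA.coe_window (n * B)).sum_card_fiber_sq_le hmaps
      fun a b => abs_sub_le_of_ediv_eq hB'
  have hinv : ∑ q ∈ Finset.Ico (-n : ℤ) n, (√(blockRank q))⁻¹ ^ 2 ≤ 2 * (1 + Real.log n) := by
    rw [sum_comp_blockRank fun l => (√l)⁻¹ ^ 2, nsmul_eq_mul, Nat.cast_ofNat]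
    simp only [inv_pow, Real.sq_sqrt (Nat.cast_nonneg _)]
    gcongr
    exact sum_Icc_inv_le_one_add_log n
  exact (sq_sum_comp_le hmaps fun q => (√(blockRank q))⁻¹).trans <|
    mul_le_mul hsq hinv (Finset.sum_nonneg fun _ _ => sq_nonneg _) (by positivity)

theorem sq_mul_log_le (hA : IsSidon A) (hB : 0 < B) (hn : 1 ≤ Real.log n) {K : ℝ} (hK : 0 ≤ K)
    (hcount : ∀ l ∈ Finset.Icc 1 n, K * √l ≤ #(window A (l * B))) :
    (K * ((Real.log n - 1) / 2)) ^ 2 ≤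
      (#(window A (n * B)) + 2 * B) * (2 * (1 + Real.log n)) := by
  have hrank : ∀ a ∈ window A (n * B), blockRank (a / B) ∈ Finset.Icc 1 n := fun a ha =>
    Finset.mem_Icc.mpr
      ⟨one_le_blockRank _, (blockRank_ediv_le_iff hB).mpr (mem_window.mp ha).1⟩
  have hlower : K * ((Real.log n - 1) / 2) ≤
      ∑ a ∈ window A (n * B), (√(blockRank (a / B)))⁻¹ :=
    mul_log_le_sum_inv_sqrt hK hrank fun l hl => by
      rw [filter_window_blockRank_le A hB (Finset.mem_Icc.mp hl).2]
      exact hcount l hl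
  have hnonneg : 0 ≤ K * ((Real.log n - 1) / 2) := mul_nonneg hK (by linarith)
  exact (pow_le_pow_left₀ hnonneg hlower 2).trans (hA.sq_sum_inv_sqrt_blockRank_le hB)

end IsSidon

theorem mul_sqrt_le_card_window {A : Set ℤ} {c : ℝ} (hc : 0 ≤ c) {n B l : ℕ} (hB : 3 ≤ B)
    (hl : l ∈ Finset.Icc 1 n)
    (hcount : ∀ x : ℝ, (B : ℝ) - 1 ≤ x → c ≤ countIn A (-x) x / √(x / Real.log x)) :
    c * √((B - 1) / Real.log (n * B)) * √l ≤ #(window A (l * B)) := by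
  obtain ⟨hl_one, hl_le⟩ := Finset.mem_Icc.mp hl
  have hl_one' : (1 : ℝ) ≤ l := by exact_mod_cast hl_one
  have hl_le' : (l : ℝ) ≤ n := by exact_mod_cast hl_le
  have hB' : (3 : ℝ) ≤ B := by exact_mod_cast hB
  set x : ℝ := (l * B : ℕ) - 1 with hx
  rw [Nat.cast_mul] at hx
  have hx_ge : (B - 1) * (l : ℝ) ≤ x := by linarith
  have hBx : (B : ℝ) - 1 ≤ x := by nlinarith
  have hx_le : x ≤ n * B := by nlinarith
  have hlog : 0 < Real.log x := Real.log_pos (by linarith)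
  have hsqrt : √((B - 1) / Real.log (n * B)) * √l ≤ √(x / Real.log x) := by
    rw [← Real.sqrt_mul' _ (by positivity), div_mul_eq_mul_div]
    gcongr <;> linarith
  calc c * √((B - 1) / Real.log (n * B)) * √l
      ≤ c * √(x / Real.log x) := by rw [mul_assoc]; gcongr
    _ ≤ countIn A (-x) x := (le_div_iff₀ (Real.sqrt_pos.mpr (div_pos (by linarith) hlog))).mp
        (hcount x hBx)
    _ ≤ #(window A (l * B)) := Nat.cast_le.mpr (countIn_le_card_window A (l * B))

theorem IsSidon.sq_mul_log_sub_one_sq_le {A : Set ℤ} (hA : IsSidon A) {c : ℝ} (hc : 0 ≤ c)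
    {n B : ℕ} (hB : 3 ≤ B) (hn : 1 ≤ Real.log n)
    (hcount : ∀ x : ℝ, (B : ℝ) - 1 ≤ x → c ≤ countIn A (-x) x / √(x / Real.log x)) :
    c ^ 2 * (B - 1) * (Real.log n - 1) ^ 2 ≤
      8 * Real.log (n * B) * (1 + Real.log n) * (#(window A (n * B)) + 2 * B) := by
  have hB' : (3 : ℝ) ≤ B := by exact_mod_cast hB
  have hn_pos : (0 : ℝ) < n := by
    by_contra! h
    norm_num [le_antisymm h n.cast_nonneg] at hn
  have hlog : 0 < Real.log (n * B) := by
    rw [Real.log_mul hn_pos.ne' (by linarith)]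
    linarith [Real.log_pos (by linarith : (1 : ℝ) < B)]
  have hineq := hA.sq_mul_log_le (Nat.zero_lt_of_lt hB) hn (by positivity)
    fun l hl => mul_sqrt_le_card_window hc hB hl hcount
  rw [mul_pow, mul_pow, Real.sq_sqrt (div_nonneg (by linarith) hlog.le)] at hineq
  have hclear : c ^ 2 * (((B : ℝ) - 1) / Real.log (n * B)) * ((Real.log n - 1) / 2) ^ 2 =
      c ^ 2 * (B - 1) * (Real.log n - 1) ^ 2 / (4 * Real.log (n * B)) := by
    field_simp
    ring
  rw [hclear, div_le_iff₀ (by positivity)] at hineq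
  linarith

theorem mul_le_mul_of_eventually_mul_log_le {C p q r s : ℝ}
    (h : ∀ᶠ n : ℕ in atTop, C * (p * n - 1) * (Real.log n - 1) ^ 2 ≤
      s * (Real.log n + q) * (1 + Real.log n) * (r * n + 1)) : C * p ≤ s * r := by
  have hu : Tendsto (fun n : ℕ => (n : ℝ)⁻¹) atTop (nhds 0) := tendsto_inv_atTop_nhds_zero_nat
  have hlog : Tendsto (fun n : ℕ => Real.log n) atTop atTop :=
    Real.tendsto_log_atTop.comp tendsto_natCast_atTop_atTop
  have hv : Tendsto (fun n : ℕ => (Real.log n)⁻¹) atTop (nhds 0) :=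
    tendsto_inv_atTop_zero.comp hlog
  have huv := hu.prodMk_nhds hv
  have hleft := ((by fun_prop : Continuous fun z : ℝ × ℝ =>
    C * (p - z.1) * (1 - z.2) ^ 2).tendsto (0, 0)).comp huv
  have hright := ((by fun_prop : Continuous fun z : ℝ × ℝ =>
    s * (1 + q * z.2) * (1 + z.2) * (r + z.1)).tendsto (0, 0)).comp huv
  suffices hle : ∀ᶠ n : ℕ in atTop,
      C * (p - (n : ℝ)⁻¹) * (1 - (Real.log n)⁻¹) ^ 2 ≤
        s * (1 + q * (Real.log n)⁻¹) * (1 + (Real.log n)⁻¹) * (r + (n : ℝ)⁻¹) by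
    simpa using le_of_tendsto_of_tendsto hleft hright hle
  filter_upwards [h, eventually_gt_atTop 0, hlog.eventually_gt_atTop 0] with n hn hn_pos hlog_pos
  have hscale := mul_le_mul_of_nonneg_right hn
    (by positivity : 0 ≤ (n : ℝ)⁻¹ * (Real.log n)⁻¹ ^ 2)
  calc C * (p - (n : ℝ)⁻¹) * (1 - (Real.log n)⁻¹) ^ 2
      = C * (p * n - 1) * (Real.log n - 1) ^ 2 * ((n : ℝ)⁻¹ * (Real.log n)⁻¹ ^ 2) := by field
    _ ≤ s * (Real.log n + q) * (1 + Real.log n) * (r * n + 1) *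
          ((n : ℝ)⁻¹ * (Real.log n)⁻¹ ^ 2) := hscale
    _ = s * (1 + q * (Real.log n)⁻¹) * (1 + (Real.log n)⁻¹) * (r + (n : ℝ)⁻¹) := by field

theorem IsSidon.sq_mul_sq_le {A : Set ℤ} (hA : IsSidon A) {c : ℝ} (hc : 0 ≤ c)
    (hcount : ∀ᶠ x : ℝ in atTop, c ≤ countIn A (-x) x / √(x / Real.log x)) {k : ℕ} (hk : 0 < k) :
    c ^ 2 * k ^ 2 ≤ 16 * (2 * k + 2 * k ^ 2) := by
  obtain ⟨x₀, hx₀⟩ := eventually_atTop.mp hcount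
  have hk' : (1 : ℝ) ≤ k := by exact_mod_cast hk
  refine mul_le_mul_of_eventually_mul_log_le (q := Real.log k) ?_
  filter_upwards [eventually_ge_atTop 3,
    (tendsto_natCast_atTop_atTop (R := ℝ)).eventually_ge_atTop (x₀ + 1),
    (Real.tendsto_log_atTop.comp tendsto_natCast_atTop_atTop).eventually_ge_atTop 1]
    with n hn_three hn_x₀ hn_log
  have hn_pos : (0 : ℝ) < n := by exact_mod_cast Nat.zero_lt_of_lt hn_three
  have hnB : n ≤ k ^ 2 * n := Nat.le_mul_of_pos_left n (by positivity)
  have hnB' : (n : ℝ) ≤ (k ^ 2 * n : ℕ) := by exact_mod_cast hnB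
  have hineq := hA.sq_mul_log_sub_one_sq_le hc (hn_three.trans hnB) hn_log
    fun x hx => hx₀ x (by linarith)
  have hsq : n * (k ^ 2 * n) = (k * n) ^ 2 := by ring
  have hlog : Real.log (n * (k ^ 2 * n : ℕ)) = 2 * (Real.log n + Real.log k) := by
    rw [← Nat.cast_mul, hsq, Nat.cast_pow, Real.log_pow, Nat.cast_mul,
      Real.log_mul (by positivity) hn_pos.ne']
    push_cast
    ring
  have hcard : (#(window A (n * (k ^ 2 * n))) : ℝ) ≤ 2 * (k * n) + 1 := by
    rw [hsq]
    exact_mod_cast hA.card_window_sq_le (k * n)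
  have hlog_k : 0 ≤ Real.log k := Real.log_nonneg hk'
  have hlog_n : 1 ≤ Real.log n := hn_log
  rw [hlog] at hineq
  push_cast at hineq
  calc c ^ 2 * (k ^ 2 * n - 1) * (Real.log n - 1) ^ 2
      ≤ 8 * (2 * (Real.log n + Real.log k)) * (1 + Real.log n) *
          (#(window A (n * (k ^ 2 * n))) + 2 * (k ^ 2 * n)) := hineq
    _ ≤ 8 * (2 * (Real.log n + Real.log k)) * (1 + Real.log n) *
          (2 * (k * n) + 1 + 2 * (k ^ 2 * n)) := by gcongr
    _ = 16 * (Real.log n + Real.log k) * (1 + Real.log n) * ((2 * k + 2 * k ^ 2) * n + 1) := by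
      ring

theorem IsSidon.le_of_eventually_le {A : Set ℤ} (hA : IsSidon A) {c : ℝ}
    (hcount : ∀ᶠ x : ℝ in atTop, c ≤ countIn A (-x) x / √(x / Real.log x)) : c ≤ 4 * √2 := by
  rcases lt_or_ge c 0 with hneg | hc
  · exact hneg.le.trans (by positivity)
  have hbound (j : ℕ) : c ^ 2 ≤ 32 + 32 * (1 / ((j : ℝ) + 1)) := by
    have hk := hA.sq_mul_sq_le hc hcount j.succ_pos
    push_cast at hk
    rw [← le_div_iff₀ (by positivity)] at hk
    exact hk.trans_eq (by field_simp; ring)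
  have hlim : Tendsto (fun j : ℕ => 32 + 32 * (1 / ((j : ℝ) + 1))) atTop (nhds 32) := by
    simpa using (tendsto_one_div_add_atTop_nhds_zero_nat (𝕜 := ℝ)).const_mul 32 |>.const_add 32
  have hsq : c ^ 2 ≤ (4 * √2) ^ 2 := by
    rw [mul_pow, Real.sq_sqrt zero_le_two]
    norm_num
    exact ge_of_tendsto' hlim hbound
  exact le_of_sq_le_sq hsq (by positivity)

theorem urb_liminf_le_general (A : Set ℤ) (hA : IsSidon A) :
    liminf (fun x : ℝ => (countIn A (-x) x : ℝ) / Real.sqrt (x / Real.log x)) atTop ≤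
      4 * Real.sqrt 2 := by
  rw [liminf_eq]
  -- Every eventual lower bound is at most `4 * √2`, so `sSup` is not the junk value `0` of an
  -- unbounded set.
  exact Real.sSup_le (fun c hc => hA.le_of_eventually_le hc) (by positivity)

/-- If `A` is a unique representation basis then
`liminf_{x→∞} A(-x,x)/√(x/log x) ≤ 4√7`. -/
theorem urb_liminf_le (A : Set ℤ) (hA : IsUniqueRepBasis A) :
    liminf (fun x : ℝ => (countIn A (-x) x : ℝ) / Real.sqrt (x / Real.log x)) atTop ≤
      4 * Real.sqrt 7 := by
  exact (urb_liminf_le_general A hA.isSidon).trans (by gcongr; norm_num)
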